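/- Fix m ≥ 1. If (i_n) and (i'_n) are two digit sequences with i_k = i'_k for all k ≤ m, with alternating Cantor series values x and x' respectively, then σ_m(x) − σ_m(x') = −q_m·(x − x'). In particular, on each cylinder set of digit sequences with fixed first m digits, σ_m is an affine function of x with slope −q_m. -/

import Mathlib

/-- `q_1 q_2 ⋯ q_n` (1-based indexing; `prodQ q 0 = 1`). -/
noncomputable def prodQ (q : ℕ → ℕ) (n : ℕ) : ℝ :=
  ∏ j ∈ Finset.Icc 1 n, (q j : ℝ)

/-- The positive Cantor series value `x = Σ_{n=1}^∞ i_n/(q_1 ⋯ q_n)`. -/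
noncomputable def cantorVal (q i : ℕ → ℕ) : ℝ :=
  ∑' n : ℕ, (i (n + 1) : ℝ) / prodQ q (n + 1)

/-- The generalized shift operator
`σ_m = Σ_{k=1}^{m-1} i_k/(q_1⋯q_k) + Σ_{l=m+1}^∞ i_l/(q_1⋯q_{m-1} q_{m+1}⋯q_l)`. -/
noncomputable def sigmaC (q i : ℕ → ℕ) (m : ℕ) : ℝ :=
  (∑ k ∈ Finset.Icc 1 (m - 1), (i k : ℝ) / prodQ q k) +
    ∑' t : ℕ, (i (m + 1 + t) : ℝ) /
      (prodQ q (m - 1) * ∏ j ∈ Finset.Icc (m + 1) (m + 1 + t), (q j : ℝ))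

/-- The `m`-fold shift `σ^m(x) = Σ_{k=m+1}^∞ i_k/(q_{m+1} ⋯ q_k)`. -/
noncomputable def shiftVal (q i : ℕ → ℕ) (m : ℕ) : ℝ :=
  ∑' t : ℕ, (i (m + 1 + t) : ℝ) / ∏ j ∈ Finset.Icc (m + 1) (m + 1 + t), (q j : ℝ)

/-- The alternating Cantor series value `x = Σ_{n=1}^∞ (-1)^n i_n/(q_1 ⋯ q_n)`. -/
noncomputable def altCantorVal (q i : ℕ → ℕ) : ℝ :=
  ∑' n : ℕ, (-1 : ℝ) ^ (n + 1) * (i (n + 1) : ℝ) / prodQ q (n + 1)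

/-- The generalized shift operator for alternating Cantor series:
`σ_m = Σ_{k=1}^{m-1} (-1)^k i_k/(q_1⋯q_k)
      + Σ_{l=m+1}^∞ (-1)^{l-1} i_l/(q_1⋯q_{m-1} q_{m+1}⋯q_l)`. -/
noncomputable def altSigma (q i : ℕ → ℕ) (m : ℕ) : ℝ :=
  (∑ k ∈ Finset.Icc 1 (m - 1), (-1 : ℝ) ^ k * (i k : ℝ) / prodQ q k) +
    ∑' t : ℕ, (-1 : ℝ) ^ (m + t) * (i (m + 1 + t) : ℝ) /
      (prodQ q (m - 1) * ∏ j ∈ Finset.Icc (m + 1) (m + 1 + t), (q j : ℝ))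

theorem prodQ_succ' (q : ℕ → ℕ) (n : ℕ) : prodQ q (n + 1) = prodQ q n * (q (n + 1) : ℝ) := by
  unfold prodQ
  rw [Finset.prod_Icc_succ_top (by omega)]

theorem prodQ_lower (q : ℕ → ℕ) (hq : ∀ n, 1 ≤ n → 2 ≤ q n) (n : ℕ) :
    (2 : ℝ) ^ n ≤ prodQ q n := by
  induction n with
  | zero => simp [prodQ]
  | succ n ih =>
    rw [prodQ_succ', pow_succ]
    have h : (2 : ℝ) ≤ (q (n + 1) : ℝ) := by exact_mod_cast hq (n + 1) (by omega)
    have h0 : (0 : ℝ) < 2 ^ n := by positivity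
    exact mul_le_mul ih h (by norm_num) (by linarith)

theorem summable_alt (q : ℕ → ℕ) (hq : ∀ n, 1 ≤ n → 2 ≤ q n) (i : ℕ → ℕ)
    (hi : ∀ n, 1 ≤ n → i n ≤ q n - 1) :
    Summable (fun n : ℕ => (-1 : ℝ) ^ (n + 1) * (i (n + 1) : ℝ) / prodQ q (n + 1)) := by
  refine Summable.of_norm_bounded summable_geometric_two (fun n => ?_)
  have h2 := prodQ_lower q hq n
  have h0 : (0 : ℝ) < 2 ^ n := by positivity
  have hP : 0 < prodQ q n := by linarith
  have hq2 := hq (n + 1) (by omega)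
  have hqp : (0 : ℝ) < (q (n + 1) : ℝ) := by exact_mod_cast (by omega : 0 < q (n + 1))
  have hle : (i (n + 1) : ℝ) ≤ (q (n + 1) : ℝ) := by
    have := hi (n + 1) (by omega)
    exact_mod_cast (by omega : i (n + 1) ≤ q (n + 1))
  rw [prodQ_succ', norm_div, norm_mul, norm_pow, norm_neg, norm_one, one_pow, one_mul,
    Real.norm_of_nonneg (by positivity), Real.norm_of_nonneg (by positivity), div_pow, one_pow,
    div_le_div_iff₀ (by positivity) h0, one_mul, mul_comm (prodQ q n)]
  exact mul_le_mul hle h2 h0.le hqp.le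

theorem prodQ_split (q : ℕ → ℕ) (m : ℕ) (t : ℕ) :
    prodQ q (t + m + 1) = prodQ q m * ∏ j ∈ Finset.Icc (m + 1) (m + 1 + t), (q j : ℝ) := by
  induction t with
  | zero => simp [prodQ_succ']
  | succ t ih =>
    rw [show t + 1 + m + 1 = (t + m + 1) + 1 by ring, prodQ_succ', ih,
      show m + 1 + (t + 1) = (m + 1 + t) + 1 by ring,
      Finset.prod_Icc_succ_top (by omega : m + 1 ≤ m + 1 + t + 1), mul_assoc,
      show t + m + 1 + 1 = m + 1 + t + 1 by ring]

theorem altSigma_eq (q : ℕ → ℕ) (hq : ∀ n, 1 ≤ n → 2 ≤ q n) (m : ℕ) (hm : 1 ≤ m)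
    (i : ℕ → ℕ) (hi : ∀ n, 1 ≤ n → i n ≤ q n - 1) :
    altSigma q i m = (∑ k ∈ Finset.Icc 1 (m - 1), (-1 : ℝ) ^ k * (i k : ℝ) / prodQ q k) +
      -(q m : ℝ) * (altCantorVal q i -
        ∑ n ∈ Finset.range m, (-1 : ℝ) ^ (n + 1) * (i (n + 1) : ℝ) / prodQ q (n + 1)) := by
  unfold altSigma altCantorVal
  rw [← (summable_alt q hq i hi).sum_add_tsum_nat_add m, add_sub_cancel_left, ← tsum_mul_left]
  congr 1
  refine tsum_congr (fun t => ?_)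
  obtain ⟨p, rfl⟩ : ∃ p, m = p + 1 := ⟨m - 1, by omega⟩
  have hqp : (q (p + 1) : ℝ) ≠ 0 := by
    have := hq (p + 1) hm
    exact_mod_cast (by omega : q (p + 1) ≠ 0)
  rw [prodQ_split, prodQ_succ', Nat.add_sub_cancel,
    show t + (p + 1) + 1 = p + 1 + 1 + t by ring,
    show p + 1 + 1 + t = (p + 1 + t) + 1 by ring, pow_succ (-1 : ℝ) (p + 1 + t)]
  rw [mul_comm (prodQ q p) (q (p + 1) : ℝ), mul_assoc (q (p + 1) : ℝ), mul_div_assoc',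
    ← mul_div_mul_left _ (prodQ q p * _) hqp]
  congr 1
  ring

theorem stmt_12 (q : ℕ → ℕ) (hq : ∀ n, 1 ≤ n → 2 ≤ q n) (m : ℕ) (hm : 1 ≤ m)
    (i i' : ℕ → ℕ) (hi : ∀ n, 1 ≤ n → i n ≤ q n - 1) (hi' : ∀ n, 1 ≤ n → i' n ≤ q n - 1)
    (hagree : ∀ k, 1 ≤ k → k ≤ m → i k = i' k) :
    altSigma q i m - altSigma q i' m =
      -(q m : ℝ) * (altCantorVal q i - altCantorVal q i') := by
  rw [altSigma_eq q hq m hm i hi, altSigma_eq q hq m hm i' hi']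
  have h1 : (∑ k ∈ Finset.Icc 1 (m - 1), (-1 : ℝ) ^ k * (i k : ℝ) / prodQ q k) =
      ∑ k ∈ Finset.Icc 1 (m - 1), (-1 : ℝ) ^ k * (i' k : ℝ) / prodQ q k := by
    refine Finset.sum_congr rfl (fun k hk => ?_)
    rw [Finset.mem_Icc] at hk
    rw [hagree k hk.1 (by omega)]
  have h2 : (∑ n ∈ Finset.range m, (-1 : ℝ) ^ (n + 1) * (i (n + 1) : ℝ) / prodQ q (n + 1)) =
      ∑ n ∈ Finset.range m, (-1 : ℝ) ^ (n + 1) * (i' (n + 1) : ℝ) / prodQ q (n + 1) := by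
    refine Finset.sum_congr rfl (fun k hk => ?_)
    rw [Finset.mem_range] at hk
    rw [hagree (k + 1) (by omega) (by omega)]
  rw [h1, h2]
  ring
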